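/- Suppose n = 2^k with k ≥ 1 (so that k₂ = k). Then there is an isomorphism of 𝔽₂-algebras P^τ ≅ 𝔽₂[e₁, e₂, …, e_s]/(e₁^{2^k}, e₂^{2^k}, e₃^{2^{k₃}}, …, e_s^{2^{k_s}}, e₁·(Σ_{j=0}^{k−1} e₁^{2^k−2^{j+1}}·e₂^{2^j})), given by e₁ ↦ ε̄₁, e₂ ↦ ε̄₂² + ε̄₁ε̄₂, and e_i ↦ ε̄_i + ε̄₁^{2i−4}ε̄₂ for 3 ≤ i ≤ s. -/

import Mathlib

open MvPolynomial

set_option synthInstance.maxHeartbeats 1000000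
set_option maxHeartbeats 1000000

noncomputable section

/-- The ideal `(ε₁ⁿ, ε₂^{2^{k₂}}, …, ε_s^{2^{k_s}})` of `𝔽₂[ε₁,…,ε_s]`, where
`s = n/2 + 1` and the variable of index `i : Fin (n/2+1)` is `ε_{i+1}`. -/
def relIdealP (n : ℕ) (k : ℕ → ℕ) : Ideal (MvPolynomial (Fin (n / 2 + 1)) (ZMod 2)) :=
  Ideal.span (Set.range fun i : Fin (n / 2 + 1) =>
    X i ^ (if (i : ℕ) = 0 then n else 2 ^ k ((i : ℕ) + 1)))

/-- `P = 𝔽₂[ε₁,…,ε_s]/(ε₁ⁿ, ε₂^{2^{k₂}}, …, ε_s^{2^{k_s}})` with `s = n/2 + 1`. -/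
abbrev P (n : ℕ) (k : ℕ → ℕ) : Type :=
  MvPolynomial (Fin (n / 2 + 1)) (ZMod 2) ⧸ relIdealP n k

/-- `ε̄_{i+1}`, the class in `P` of the variable of index `i`. -/
def eps (n : ℕ) (k : ℕ → ℕ) (i : Fin (n / 2 + 1)) : P n k :=
  Ideal.Quotient.mk _ (X i)

/-- The subalgebra `P^τ` of `τ`-invariant elements. -/
def Pfix (n : ℕ) (k : ℕ → ℕ) (τ : P n k →ₐ[ZMod 2] P n k) : Subalgebra (ZMod 2) (P n k) :=
  AlgHom.equalizer τ (AlgHom.id (ZMod 2) (P n k))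

end

noncomputable section

/-- The ideal `(e₁^{2^K}, e₂^{2^K}, e₃^{2^{k₃}}, …, e_s^{2^{k_s}},
e₁·(Σ_{j=0}^{K−1} e₁^{2^K−2^{j+1}}·e₂^{2^j}))` of `𝔽₂[e₁,…,e_s]`, the variable of
index `c : Fin (n/2+1)` being `e_{c+1}`. -/
def relIdealPow (n K : ℕ) (k : ℕ → ℕ) : Ideal (MvPolynomial (Fin (n / 2 + 1)) (ZMod 2)) :=
  Ideal.span (insert
    (X 0 * ∑ j ∈ Finset.range K, X 0 ^ (2 ^ K - 2 ^ (j + 1)) * X 1 ^ 2 ^ j)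
    (Set.range fun c : Fin (n / 2 + 1) =>
      if (c : ℕ) ≤ 1 then X c ^ 2 ^ K else X c ^ 2 ^ k ((c : ℕ) + 1)))

end

/-- The sum `Σ_{j<K} x^{2^K−2^{j+1}}·e^{2^j}`. -/
def frobSum {R : Type*} [CommRing R] (K : ℕ) (x e : R) : R :=
  ∑ j ∈ Finset.range K, x ^ (2 ^ K - 2 ^ (j + 1)) * e ^ 2 ^ j

lemma map_frobSum {R S : Type*} [CommRing R] [CommRing S] (f : R →+* S) (K : ℕ) (x e : R) :
    f (frobSum K x e) = frobSum K (f x) (f e) := by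
  simp [frobSum]

section CharTwo

variable {R : Type*} [CommRing R]

lemma frobSum_succ (K : ℕ) (x e : R) :
    frobSum (K + 1) x e = x ^ 2 ^ K * frobSum K x e + e ^ 2 ^ K := by
  rw [frobSum, Finset.sum_range_succ, Nat.sub_self, pow_zero, one_mul, frobSum, Finset.mul_sum]
  congr 1
  refine Finset.sum_congr rfl fun j hj => ?_
  have h : 2 ^ (j + 1) ≤ 2 ^ K := Nat.pow_le_pow_right two_pos (Finset.mem_range.mp hj)
  rw [← mul_assoc, ← pow_add]
  congr 2
  rw [pow_succ 2 K]
  omega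

lemma frobSum_succ_eq_sq (h2 : (2 : R) = 0) (K : ℕ) (x e : R) :
    frobSum (K + 1) x e = frobSum K x e ^ 2 + x ^ (2 ^ (K + 1) - 2) * e := by
  induction K with
  | zero => simp [frobSum]
  | succ K ih =>
    have hexp : x ^ (2 ^ (K + 1 + 1) - 2) = x ^ 2 ^ (K + 1) * x ^ (2 ^ (K + 1) - 2) := by
      rw [← pow_add]
      congr 1
      have : 2 ≤ 2 ^ (K + 1) := Nat.le_self_pow (by omega) 2
      rw [pow_succ 2 (K + 1)]
      omega
    rw [frobSum_succ (K + 1), hexp]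
    nth_rewrite 1 [ih]
    rw [frobSum_succ K]
    linear_combination (-(x ^ 2 ^ K * frobSum K x e * e ^ 2 ^ K)) * h2

lemma frobSum_sq (h2 : (2 : R) = 0) {K : ℕ} (hK : 1 ≤ K) {x : R} (hx : x ^ 2 ^ K = 0) (e : R) :
    frobSum K x e ^ 2 = e ^ 2 ^ K := by
  have hexp : x ^ (2 ^ (K + 1) - 2) = 0 := by
    refine pow_eq_zero_of_le ?_ hx
    have : 2 ≤ 2 ^ K := Nat.le_self_pow (by omega) 2
    rw [pow_succ 2 K]
    omega
  have h := frobSum_succ_eq_sq h2 K x e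
  rw [frobSum_succ, hx, hexp] at h
  linear_combination -h

lemma pow_two_pow_eq_frobSum (h2 : (2 : R) = 0) (K : ℕ) {x e y : R} (hy : y ^ 2 = e + x * y) :
    y ^ 2 ^ K = frobSum K x e + x ^ (2 ^ K - 1) * y := by
  induction K with
  | zero => simp [frobSum]
  | succ K ih =>
    have h1 : 1 ≤ 2 ^ K := Nat.one_le_two_pow
    have hsq : x ^ (2 ^ (K + 1) - 2) = (x ^ (2 ^ K - 1)) ^ 2 := by
      rw [← pow_mul]
      congr 1
      rw [pow_succ 2 K]
      omega
    have hexp : x ^ (2 ^ (K + 1) - 1) = x * (x ^ (2 ^ K - 1)) ^ 2 := by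
      rw [← hsq, ← pow_succ']
      congr 1
      rw [pow_succ 2 K]
      omega
    rw [pow_succ 2 K, pow_mul, ih, ← pow_succ, frobSum_succ_eq_sq h2, hexp, hsq]
    linear_combination (frobSum K x e * x ^ (2 ^ K - 1) * y) * h2 + (x ^ (2 ^ K - 1)) ^ 2 * hy

lemma add_pow_two_pow (h2 : (2 : R) = 0) (a b : R) (m : ℕ) :
    (a + b) ^ 2 ^ m = a ^ 2 ^ m + b ^ 2 ^ m := by
  induction m with
  | zero => simp
  | succ m ih =>
    rw [pow_succ 2 m, pow_mul, ih]
    linear_combination (a ^ 2 ^ m * b ^ 2 ^ m) * h2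

end CharTwo

open QuadraticAlgebra in
lemma omega_sq_eq {R : Type*} [CommRing R] (e x : R) :
    (omega : QuadraticAlgebra R e x) ^ 2 = algebraMap R _ e + algebraMap R _ x * omega := by
  ext <;> simp [pow_two]

/-- The divisibility properties of `x` and `e` in `B[x, e]/(x^N)`, for any base ring `B`. -/
structure IsTruncatedPair {R : Type*} [CommRing R] (N : ℕ) (x e : R) : Prop where
  pow_eq_zero : x ^ N = 0
  dvd_of_dvd_pow_mul : ∀ j m : ℕ, j + m ≤ N → ∀ c : R, x ^ (j + m) ∣ x ^ j * c → x ^ m ∣ c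
  dvd_of_dvd_mul : ∀ m ≤ N, ∀ c : R, x ^ m ∣ e * c → x ^ m ∣ c

namespace IsTruncatedPair

variable {R : Type*} [CommRing R] {K : ℕ} {x e : R}

lemma dvd_of_dvd_pow_mul_right {N : ℕ} (h : IsTruncatedPair N x e) {m : ℕ} (hm : m ≤ N) (r : ℕ)
    {c : R} (hc : x ^ m ∣ e ^ r * c) : x ^ m ∣ c := by
  induction r with
  | zero => simpa using hc
  | succ r ih => exact ih (h.dvd_of_dvd_mul m hm _ (by rwa [← mul_assoc, ← pow_succ']))

lemma dvd_of_dvd_frobSum_mul (h : IsTruncatedPair (2 ^ K) x e) (hK : 1 ≤ K) {m : ℕ}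
    (hm : m ≤ 2 ^ K) {c : R} (hc : x ^ m ∣ frobSum K x e * c) : x ^ m ∣ c := by
  obtain ⟨L, rfl⟩ : ∃ L, K = L + 1 := ⟨K - 1, by omega⟩
  induction m with
  | zero => simp
  | succ m ih =>
    obtain ⟨c', hc'⟩ := ih (by omega) ((pow_dvd_pow x (Nat.le_succ m)).trans hc)
    have hx : x ^ 2 ^ L = x * x ^ (2 ^ L - 1) := by
      rw [← pow_succ', Nat.sub_add_cancel Nat.one_le_two_pow]
    refine h.dvd_of_dvd_pow_mul_right hm (2 ^ L) ?_
    have h' : e ^ 2 ^ L * c = frobSum (L + 1) x e * c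
        - x ^ (m + 1) * (x ^ (2 ^ L - 1) * frobSum L x e * c') := by
      rw [frobSum_succ, hx, hc']
      ring
    rw [h']
    exact dvd_sub hc (dvd_mul_right _ _)

lemma mem_span_of_mul_eq (h : IsTruncatedPair (2 ^ K) x e) (hK : 1 ≤ K) (h2 : (2 : R) = 0)
    {α β : R} (hαβ : x ^ (2 ^ K - 1) * α + frobSum K x e * β = 0) :
    frobSum K x e * α + x ^ (2 ^ K - 1) * e * β ∈
      Ideal.span {x * frobSum K x e, e ^ 2 ^ K} := by
  have hN : 2 ≤ 2 ^ K := Nat.le_self_pow (by omega) 2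
  obtain ⟨β', rfl⟩ : x ^ (2 ^ K - 1) ∣ β :=
    h.dvd_of_dvd_frobSum_mul hK (by omega) ⟨-α, by linear_combination hαβ⟩
  have hx : x ^ (2 ^ K - 1 + 1) ∣ x ^ (2 ^ K - 1) * (α + frobSum K x e * β') :=
    ⟨0, by linear_combination hαβ⟩
  obtain ⟨γ, hγ⟩ := h.dvd_of_dvd_pow_mul _ 1 (by omega) _ hx
  have hxx : x ^ (2 ^ K - 1) * x ^ (2 ^ K - 1) = 0 := by
    rw [← pow_add]
    exact pow_eq_zero_of_le (by omega) h.pow_eq_zero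
  refine Ideal.mem_span_pair.mpr ⟨γ, -β', ?_⟩
  linear_combination -frobSum K x e * hγ - e * β' * hxx + β' * frobSum_sq h2 hK h.pow_eq_zero e

lemma mem_span_of_mul_mem (h : IsTruncatedPair (2 ^ K) x e) (hK : 1 ≤ K) (h2 : (2 : R) = 0)
    {b : R} (hb : x * b ∈ Ideal.span {x * frobSum K x e, e ^ 2 ^ K}) :
    b ∈ Ideal.span {frobSum K x e, x ^ (2 ^ K - 1)} := by
  have hN : 2 ≤ 2 ^ K := Nat.le_self_pow (by omega) 2
  obtain ⟨c, d, hcd⟩ := Ideal.mem_span_pair.mp hb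
  have hd : x ^ 1 ∣ e ^ 2 ^ K * d := ⟨b - c * frobSum K x e, by linear_combination hcd⟩
  obtain ⟨d', rfl⟩ := h.dvd_of_dvd_pow_mul_right (by omega) _ hd
  have hx : x ^ (1 + (2 ^ K - 1)) ∣
      x ^ 1 * (b - frobSum K x e * c - frobSum K x e ^ 2 * d') := by
    refine ⟨0, ?_⟩
    rw [frobSum_sq h2 hK h.pow_eq_zero]
    linear_combination -hcd
  obtain ⟨f, hf⟩ := h.dvd_of_dvd_pow_mul 1 _ (by omega) _ hx
  refine Ideal.mem_span_pair.mpr ⟨c + frobSum K x e * d', f, ?_⟩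
  linear_combination -hf

open QuadraticAlgebra in
lemma mem_span_of_omega_pow_dvd (h : IsTruncatedPair (2 ^ K) x e) (hK : 1 ≤ K)
    (h2 : (2 : R) = 0) {a : R}
    (ha : (omega : QuadraticAlgebra R e x) ^ 2 ^ K ∣ algebraMap R _ a) :
    a ∈ Ideal.span {x * frobSum K x e, e ^ 2 ^ K} := by
  have hN : 2 ≤ 2 ^ K := Nat.le_self_pow (by omega) 2
  have h2' : (2 : QuadraticAlgebra R e x) = 0 := by
    rw [← map_ofNat (algebraMap R (QuadraticAlgebra R e x)) 2, h2, map_zero]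
  obtain ⟨t, ht⟩ := ha
  rw [pow_two_pow_eq_frobSum h2' K (omega_sq_eq e x), ← map_frobSum, ← map_pow] at ht
  have hre := congrArg QuadraticAlgebra.re ht
  have him := congrArg QuadraticAlgebra.im ht
  simp [-map_pow] at hre him
  have hx : x ^ (2 ^ K - 1) * x = 0 := by
    rw [← pow_succ, Nat.sub_add_cancel (by omega), h.pow_eq_zero]
  have := h.mem_span_of_mul_eq hK h2 (α := t.re) (β := t.im)
    (by linear_combination -him - t.im * hx)
  convert this using 1
  linear_combination hre

end IsTruncatedPair

lemma two_eq_zero_of_algebra (A : Type*) [CommRing A] [Algebra (ZMod 2) A] : (2 : A) = 0 := by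
  rw [← map_ofNat (algebraMap (ZMod 2) A) 2, show (OfNat.ofNat 2 : ZMod 2) = 0 from rfl, map_zero]

lemma mem_span_X_pow_image {σ R : Type*} [CommRing R] {d : σ → ℕ} {A : Set σ}
    {p : MvPolynomial σ R} :
    p ∈ Ideal.span ((fun i => (X i : MvPolynomial σ R) ^ d i) '' A) ↔
      ∀ m ∈ p.support, ∃ i ∈ A, d i ≤ m i := by
  have := @mem_ideal_span_monomial_image σ R _ p ((fun i => Finsupp.single i (d i)) '' A)
  rw [Set.image_image] at this
  simp only [X_pow_eq_monomial]
  refine this.trans ?_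
  simp

lemma mem_span_of_X_pow_mul_mem {σ R : Type*} [CommRing R] {d d' : σ → ℕ} {A : Set σ}
    {i : σ} {j : ℕ} (hd : ∀ l ∈ A, d' l ≤ d l - Finsupp.single i j l) {p : MvPolynomial σ R}
    (hp : X i ^ j * p ∈ Ideal.span ((fun i => (X i : MvPolynomial σ R) ^ d i) '' A)) :
    p ∈ Ideal.span ((fun i => (X i : MvPolynomial σ R) ^ d' i) '' A) := by
  rw [mem_span_X_pow_image] at hp ⊢
  intro m hm
  obtain ⟨l, hl, hle⟩ := hp (Finsupp.single i j + m) (by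
    rw [mem_support_iff, X_pow_eq_monomial, coeff_monomial_mul, one_mul]
    exact mem_support_iff.mp hm)
  refine ⟨l, hl, (hd l hl).trans ?_⟩
  rw [Finsupp.add_apply] at hle
  omega

lemma fin_val_one {n : ℕ} (hn : 2 ≤ n) : ((1 : Fin (n / 2 + 1)) : ℕ) = 1 := by
  rw [Fin.val_one', Nat.mod_eq_of_lt]
  omega

/-- The ideal generated by `e₁^m` and by `e_i^{2^{k_i}}` for `i ≥ 3`. -/
noncomputable def truncIdeal (n m : ℕ) (k : ℕ → ℕ) :
    Ideal (MvPolynomial (Fin (n / 2 + 1)) (ZMod 2)) :=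
  Ideal.span ((fun i : Fin (n / 2 + 1) =>
    X i ^ (if (i : ℕ) = 0 then m else 2 ^ k ((i : ℕ) + 1))) '' {i | (i : ℕ) ≠ 1})

lemma X_zero_pow_mem_truncIdeal (n m : ℕ) (k : ℕ → ℕ) : X 0 ^ m ∈ truncIdeal n m k :=
  Ideal.subset_span ⟨0, by simp, by simp⟩

lemma X_pow_mem_truncIdeal (n m : ℕ) (k : ℕ → ℕ) {i : Fin (n / 2 + 1)} (hi : 2 ≤ (i : ℕ)) :
    X i ^ 2 ^ k ((i : ℕ) + 1) ∈ truncIdeal n m k :=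
  Ideal.subset_span ⟨i, by rw [Set.mem_ofPred_eq]; omega, by simp [show (i : ℕ) ≠ 0 by omega]⟩

lemma truncIdeal_le {n m : ℕ} {k : ℕ → ℕ} {J : Ideal (MvPolynomial (Fin (n / 2 + 1)) (ZMod 2))}
    (h0 : X 0 ^ m ∈ J)
    (h : ∀ i : Fin (n / 2 + 1), 2 ≤ (i : ℕ) → X i ^ 2 ^ k ((i : ℕ) + 1) ∈ J) :
    truncIdeal n m k ≤ J := by
  rw [truncIdeal, Ideal.span_le]
  rintro _ ⟨i, hi, rfl⟩
  rw [Set.mem_ofPred_eq] at hi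
  by_cases hi0 : (i : ℕ) = 0
  · obtain rfl : i = 0 := Fin.ext hi0
    simpa using h0
  · simpa [hi0] using h i (by omega)

lemma X_zero_pow_dvd_mk_iff {n m : ℕ} (hm : m ≤ n) (k : ℕ → ℕ)
    (c : MvPolynomial (Fin (n / 2 + 1)) (ZMod 2)) :
    Ideal.Quotient.mk (truncIdeal n n k) (X 0) ^ m ∣ Ideal.Quotient.mk (truncIdeal n n k) c ↔
      c ∈ truncIdeal n m k := by
  have hle : truncIdeal n n k ≤ truncIdeal n m k :=
    truncIdeal_le (Ideal.pow_mem_of_pow_mem _ (X_zero_pow_mem_truncIdeal n m k) hm)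
      fun i hi => X_pow_mem_truncIdeal n m k hi
  constructor
  · rintro ⟨q, hq⟩
    obtain ⟨q, rfl⟩ := Ideal.Quotient.mk_surjective q
    rw [← map_pow, ← map_mul, Ideal.Quotient.eq] at hq
    have := (truncIdeal n m k).add_mem (hle hq)
      ((truncIdeal n m k).mul_mem_right q (X_zero_pow_mem_truncIdeal n m k))
    rwa [sub_add_cancel] at this
  · intro hc
    rw [← Ideal.mem_span_singleton, ← Ideal.mem_comap]
    refine truncIdeal_le (m := m) (k := k) ?_ (fun i hi => ?_) hc
    · rw [Ideal.mem_comap, map_pow]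
      exact Ideal.mem_span_singleton_self _
    · rw [Ideal.mem_comap, Ideal.Quotient.eq_zero_iff_mem.mpr (X_pow_mem_truncIdeal n n k hi)]
      exact zero_mem _

lemma isTruncatedPair_mk {n : ℕ} (hn : 2 ≤ n) (k : ℕ → ℕ) :
    IsTruncatedPair n (Ideal.Quotient.mk (truncIdeal n n k) (X 0))
      (Ideal.Quotient.mk (truncIdeal n n k) (X 1)) where
  pow_eq_zero := by
    rw [← map_pow]
    exact Ideal.Quotient.eq_zero_iff_mem.mpr (X_zero_pow_mem_truncIdeal n n k)
  dvd_of_dvd_pow_mul j m hjm c hc := by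
    obtain ⟨c, rfl⟩ := Ideal.Quotient.mk_surjective c
    rw [← map_pow _ _ j, ← map_mul, X_zero_pow_dvd_mk_iff hjm] at hc
    rw [X_zero_pow_dvd_mk_iff (by omega)]
    refine mem_span_of_X_pow_mul_mem (fun l _ => ?_) hc
    by_cases hl : l = 0
    · simp [hl]
    · simp [hl]
  dvd_of_dvd_mul m hm c hc := by
    obtain ⟨c, rfl⟩ := Ideal.Quotient.mk_surjective c
    rw [← map_mul, X_zero_pow_dvd_mk_iff hm] at hc
    rw [X_zero_pow_dvd_mk_iff hm]
    refine mem_span_of_X_pow_mul_mem (i := 1) (j := 1) (fun l hl => ?_) (by rwa [pow_one])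
    have : (1 : Fin (n / 2 + 1)) ≠ l := by
      rintro rfl
      exact hl (fin_val_one hn)
    simp [this]

lemma eps_pow_eq_zero (n : ℕ) (k : ℕ → ℕ) (i : Fin (n / 2 + 1)) :
    eps n k i ^ (if (i : ℕ) = 0 then n else 2 ^ k ((i : ℕ) + 1)) = 0 := by
  rw [eps, ← map_pow, Ideal.Quotient.eq_zero_iff_mem]
  exact Ideal.subset_span ⟨i, rfl⟩

/-- The universal property of `P`. -/
lemma exists_algHom_P {A : Type*} [CommRing A] [Algebra (ZMod 2) A] {n : ℕ} {k : ℕ → ℕ}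
    {f : Fin (n / 2 + 1) → A}
    (hf : ∀ i, f i ^ (if (i : ℕ) = 0 then n else 2 ^ k ((i : ℕ) + 1)) = 0) :
    ∃ θ : P n k →ₐ[ZMod 2] A, ∀ i, θ (eps n k i) = f i := by
  have hle : relIdealP n k ≤ RingHom.ker (aeval f : MvPolynomial _ (ZMod 2) →ₐ[ZMod 2] A) := by
    rw [relIdealP, Ideal.span_le]
    rintro _ ⟨i, rfl⟩
    rw [SetLike.mem_coe, RingHom.mem_ker, map_pow, aeval_X, hf]
  refine ⟨Ideal.Quotient.liftₐ _ (aeval f) fun a ha => hle ha, fun i => ?_⟩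
  rw [eps]
  exact aeval_X f i

lemma le_mul_two_pow {n K c q : ℕ} (hnK : n = 2 ^ K) (hc : 2 ≤ c)
    (h1 : (2 * c - 1) * 2 ^ q ≤ 2 * n - 1) (h2 : 2 * n - 1 < (2 * c - 1) * 2 ^ (q + 1)) :
    n ≤ (2 * c - 2) * 2 ^ q := by
  subst hnK
  have hpos : 0 < 2 ^ q := by positivity
  have hK : 0 < 2 ^ K := by positivity
  have hqK : q < K := by
    by_contra! hle
    have : 2 ^ K ≤ 2 ^ q := Nat.pow_le_pow_right two_pos hle
    have : 3 * 2 ^ q ≤ (2 * c - 1) * 2 ^ q := Nat.mul_le_mul_right _ (by omega)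
    omega
  obtain ⟨r, rfl⟩ : ∃ r, K = r + 1 + q := ⟨K - q - 1, by omega⟩
  rw [pow_add _ (r + 1)] at h2 hK ⊢
  have hlt : 2 ^ (r + 1) * 2 ^ q ≤ (2 * c - 1) * 2 ^ q := by
    rw [pow_succ 2 q] at h2
    generalize 2 ^ (r + 1) * 2 ^ q = u at *
    have : (2 * c - 1) * (2 ^ q * 2) = 2 * ((2 * c - 1) * 2 ^ q) := by ring
    omega
  have := Nat.le_of_mul_le_mul_right hlt hpos
  refine Nat.mul_le_mul_right _ ?_
  rw [pow_succ] at this ⊢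
  omega

/-- The images in `P` of the generators `e₁, …, e_s`. -/
noncomputable def invGen (n : ℕ) (k : ℕ → ℕ) (i : Fin (n / 2 + 1)) : P n k :=
  if (i : ℕ) = 0 then eps n k 0
  else if (i : ℕ) = 1 then eps n k 1 ^ 2 + eps n k 0 * eps n k 1
  else eps n k i + eps n k 0 ^ (2 * (i : ℕ) - 2) * eps n k 1

/-- The algebra homomorphism `𝔽₂[e₁, …, e_s] → P` sending `e_i` to `invGen n k i`. -/
noncomputable def invHom (n : ℕ) (k : ℕ → ℕ) :
    MvPolynomial (Fin (n / 2 + 1)) (ZMod 2) →ₐ[ZMod 2] P n k :=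
  aeval (invGen n k)

lemma invHom_X_zero (n : ℕ) (k : ℕ → ℕ) : invHom n k (X 0) = eps n k 0 := by
  simp [invHom, invGen]

lemma invHom_X_one {n : ℕ} (hn : 2 ≤ n) (k : ℕ → ℕ) :
    invHom n k (X 1) = eps n k 1 ^ 2 + eps n k 0 * eps n k 1 := by
  rw [invHom, aeval_X, invGen, fin_val_one hn, if_neg one_ne_zero, if_pos rfl]

lemma invHom_X {n : ℕ} (k : ℕ → ℕ) {i : Fin (n / 2 + 1)} (hi : 2 ≤ (i : ℕ)) :
    invHom n k (X i) = eps n k i + eps n k 0 ^ (2 * (i : ℕ) - 2) * eps n k 1 := by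
  rw [invHom, aeval_X, invGen, if_neg (by omega), if_neg (by omega)]

lemma fin_cases_of_val {n : ℕ} (hn : 2 ≤ n) (i : Fin (n / 2 + 1)) :
    i = 0 ∨ i = 1 ∨ 2 ≤ (i : ℕ) := by
  rcases Nat.lt_or_ge (i : ℕ) 2 with h | h
  · rcases Nat.lt_or_ge (i : ℕ) 1 with h' | h'
    · exact Or.inl (Fin.ext (by rw [Fin.val_zero]; omega))
    · exact Or.inr (Or.inl (Fin.ext (by rw [fin_val_one hn]; omega)))
  · exact Or.inr (Or.inr h)

lemma exists_eq_invHom_add_mul {n : ℕ} (hn : 2 ≤ n) (k : ℕ → ℕ) (p : P n k) :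
    ∃ a b, p = invHom n k a + invHom n k b * eps n k 1 := by
  have h2 := two_eq_zero_of_algebra (P n k)
  obtain ⟨p, rfl⟩ := Ideal.Quotient.mk_surjective p
  induction p using MvPolynomial.induction_on with
  | C r =>
    refine ⟨C r, 0, ?_⟩
    rw [map_zero, zero_mul, add_zero]
    exact ((invHom n k).commutes r).symm
  | add p q hp hq =>
    obtain ⟨a, b, hp⟩ := hp
    obtain ⟨c, d, hq⟩ := hq
    refine ⟨a + c, b + d, ?_⟩
    rw [map_add, hp, hq, map_add, map_add]
    ring
  | mul_X p i hp =>
    obtain ⟨a, b, hp⟩ := hp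
    have hX : ∃ u v, eps n k i = invHom n k u + invHom n k v * eps n k 1 := by
      rcases fin_cases_of_val hn i with rfl | rfl | hi
      · exact ⟨X 0, 0, by simp [invHom_X_zero]⟩
      · exact ⟨0, 1, by simp⟩
      · refine ⟨X i, X 0 ^ (2 * (i : ℕ) - 2), ?_⟩
        rw [map_pow, invHom_X_zero, invHom_X k hi]
        linear_combination -(eps n k 0 ^ (2 * (i : ℕ) - 2) * eps n k 1) * h2
    obtain ⟨u, v, hX⟩ := hX
    refine ⟨a * u + b * v * X 1, a * v + b * u + b * v * X 0, ?_⟩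
    rw [map_mul, hp]
    change _ * eps n k i = _
    rw [hX]
    simp only [map_add, map_mul, invHom_X_zero, invHom_X_one hn]
    linear_combination -(invHom n k b * invHom n k v * eps n k 0 * eps n k 1) * h2

section Presentation

variable {n K : ℕ} {k : ℕ → ℕ}

lemma eps_zero_pow_eq_zero (n : ℕ) (k : ℕ → ℕ) : eps n k 0 ^ n = 0 := by
  simpa using eps_pow_eq_zero n k 0

lemma eps_one_pow_eq_zero (hn : 2 ≤ n) (hk2 : 2 ^ k 2 = n) : eps n k 1 ^ n = 0 := by
  have := eps_pow_eq_zero n k 1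
  rwa [fin_val_one hn, if_neg one_ne_zero, hk2] at this

lemma invHom_frobSum (hn : 2 ≤ n) (k : ℕ → ℕ) (K : ℕ) :
    invHom n k (frobSum K (X 0) (X 1)) =
      frobSum K (eps n k 0) (eps n k 1 ^ 2 + eps n k 0 * eps n k 1) := by
  rw [← invHom_X_one hn, ← invHom_X_zero]
  exact map_frobSum (invHom n k).toRingHom K (X 0) (X 1)

lemma map_eps_one (hn : 2 ≤ n) {τ : P n k →ₐ[ZMod 2] P n k}
    (hτ : ∀ i : Fin (n / 2 + 1), 1 ≤ (i : ℕ) →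
      τ (eps n k i) = eps n k i + eps n k 0 ^ (2 * (i : ℕ) - 1)) :
    τ (eps n k 1) = eps n k 1 + eps n k 0 := by
  have h := hτ 1 (fin_val_one hn).ge
  rwa [fin_val_one hn, mul_one, show 2 - 1 = 1 from rfl, pow_one] at h

/-- The class of `e_i` in `𝔽₂[e₁, …, e_s]/(e₁ⁿ, e₃^{2^{k₃}}, …, e_s^{2^{k_s}})`. -/
noncomputable abbrev truncX (n : ℕ) (k : ℕ → ℕ) (i : Fin (n / 2 + 1)) :
    MvPolynomial (Fin (n / 2 + 1)) (ZMod 2) ⧸ truncIdeal n n k :=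
  Ideal.Quotient.mk (truncIdeal n n k) (X i)

open QuadraticAlgebra in
lemma omega_pow_dvd_of_invHom_eq_zero (hn : 2 ≤ n) (hk2 : 2 ^ k 2 = n)
    (hk : ∀ c : Fin (n / 2 + 1), 2 ≤ (c : ℕ) →
      n ≤ (2 * (c : ℕ) - 2) * 2 ^ k ((c : ℕ) + 1))
    {f : MvPolynomial (Fin (n / 2 + 1)) (ZMod 2)} (hf : invHom n k f = 0) :
    (omega : QuadraticAlgebra _ (truncX n k 1) (truncX n k 0)) ^ n ∣
      algebraMap _ _ (Ideal.Quotient.mk (truncIdeal n n k) f) := by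
  let T := QuadraticAlgebra _ (truncX n k 1) (truncX n k 0)
  let y : T := omega
  let ι : MvPolynomial (Fin (n / 2 + 1)) (ZMod 2) →ₐ[ZMod 2] T :=
    (IsScalarTower.toAlgHom (ZMod 2) (MvPolynomial (Fin (n / 2 + 1)) (ZMod 2) ⧸ truncIdeal n n k)
      T).comp (Ideal.Quotient.mkₐ (ZMod 2) (truncIdeal n n k))
  have hι : ∀ p, p ∈ truncIdeal n n k → ι p = 0 := fun p hp => by
    change algebraMap _ T (Ideal.Quotient.mk (truncIdeal n n k) p) = 0
    rw [Ideal.Quotient.eq_zero_iff_mem.mpr hp, map_zero]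
  have hy : y ^ 2 = ι (X 1) + ι (X 0) * y := by
    exact omega_sq_eq _ _
  let π : T →ₐ[ZMod 2] T ⧸ Ideal.span {y ^ n} := Ideal.Quotient.mkₐ (ZMod 2) _
  have hπy : π (y ^ n) = 0 :=
    Ideal.Quotient.eq_zero_iff_mem.mpr (Ideal.mem_span_singleton_self _)
  have h2 := two_eq_zero_of_algebra T
  let g : Fin (n / 2 + 1) → T := fun i =>
    if (i : ℕ) = 0 then ι (X 0) else if (i : ℕ) = 1 then y
    else ι (X i) + ι (X 0) ^ (2 * (i : ℕ) - 2) * y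
  have hg0 : g 0 = ι (X 0) := by simp [g]
  have hg1 : g 1 = y := by
    simp only [g]
    rw [fin_val_one hn, if_neg one_ne_zero, if_pos rfl]
  have hgi : ∀ i : Fin (n / 2 + 1), 2 ≤ (i : ℕ) →
      g i = ι (X i) + ι (X 0) ^ (2 * (i : ℕ) - 2) * y := fun i hi => by
    simp only [g]
    rw [if_neg (by omega), if_neg (by omega)]
  have hx : ι (X 0) ^ n = 0 := by
    rw [← map_pow]
    exact hι _ (X_zero_pow_mem_truncIdeal n n k)
  obtain ⟨θ, hθ⟩ := exists_algHom_P (n := n) (k := k) (f := fun i => π (g i)) (fun i => by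
    rw [← map_pow]
    rcases fin_cases_of_val hn i with rfl | rfl | hi
    · rw [hg0, if_pos (Fin.val_zero _), hx, map_zero]
    · rw [hg1, fin_val_one hn, if_neg one_ne_zero, hk2, hπy]
    · rw [hgi i hi, if_neg (by omega), add_pow_two_pow h2, mul_pow, ← pow_mul,
        pow_eq_zero_of_le (hk i hi) hx, ← map_pow, hι _ (X_pow_mem_truncIdeal n n k hi),
        zero_mul, add_zero, map_zero])
  have hcomp : θ.comp (invHom n k) = π.comp ι := by
    refine MvPolynomial.algHom_ext fun i => ?_
    rw [AlgHom.comp_apply, AlgHom.comp_apply]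
    rcases fin_cases_of_val hn i with rfl | rfl | hi
    · rw [invHom_X_zero, hθ, hg0]
    · rw [invHom_X_one hn, map_add, map_pow, map_mul, hθ, hθ, hg0, hg1, ← map_pow, ← map_mul,
        ← map_add, hy]
      congr 1
      linear_combination (ι (X 0) * y) * h2
    · rw [invHom_X k hi, map_add, map_mul, map_pow, hθ, hθ, hθ, hg0, hg1, hgi i hi,
        ← map_pow π, ← map_mul, ← map_add]
      congr 1
      linear_combination (ι (X 0) ^ (2 * (i : ℕ) - 2) * y) * h2
  have hzero : π (ι f) = 0 := by
    rw [← AlgHom.comp_apply, ← hcomp, AlgHom.comp_apply, hf, map_zero]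
  exact Ideal.mem_span_singleton.mp (Ideal.Quotient.eq_zero_iff_mem.mp hzero)

lemma relIdealPow_eq (hn : 2 ≤ n) (hnK : n = 2 ^ K) :
    relIdealPow n K k =
      truncIdeal n n k ⊔ Ideal.span {X 0 * frobSum K (X 0) (X 1), X 1 ^ 2 ^ K} := by
  apply le_antisymm
  · rw [relIdealPow, Ideal.span_le, Set.insert_subset_iff]
    refine ⟨Ideal.mem_sup_right (Ideal.subset_span (Or.inl rfl)), ?_⟩
    rintro _ ⟨c, rfl⟩
    rcases fin_cases_of_val hn c with rfl | rfl | hi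
    · refine Ideal.mem_sup_left ?_
      simpa [← hnK] using X_zero_pow_mem_truncIdeal n n k
    · refine Ideal.mem_sup_right (Ideal.subset_span (Or.inr ?_))
      exact if_pos (fin_val_one hn).le
    · refine Ideal.mem_sup_left ?_
      simpa [show ¬ (c : ℕ) ≤ 1 by omega] using X_pow_mem_truncIdeal n n k hi
  · have hmem : ∀ c : Fin (n / 2 + 1),
        (if (c : ℕ) ≤ 1 then X c ^ 2 ^ K else X c ^ 2 ^ k ((c : ℕ) + 1)) ∈ relIdealPow n K k :=
      fun c => Ideal.subset_span (Or.inr ⟨c, rfl⟩)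
    refine sup_le (truncIdeal_le ?_ fun i hi => ?_) ?_
    · simpa [← hnK] using hmem 0
    · simpa [show ¬ (i : ℕ) ≤ 1 by omega] using hmem i
    · rw [Ideal.span_le, Set.insert_subset_iff, Set.singleton_subset_iff]
      refine ⟨Ideal.subset_span (Or.inl rfl), ?_⟩
      have := hmem 1
      rwa [if_pos (fin_val_one hn).le] at this

lemma mem_relIdealPow_iff (hn : 2 ≤ n) (hnK : n = 2 ^ K)
    (f : MvPolynomial (Fin (n / 2 + 1)) (ZMod 2)) :
    f ∈ relIdealPow n K k ↔ Ideal.Quotient.mk (truncIdeal n n k) f ∈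
      Ideal.span {truncX n k 0 * frobSum K (truncX n k 0) (truncX n k 1),
        truncX n k 1 ^ 2 ^ K} := by
  rw [relIdealPow_eq hn hnK, sup_comm, ← Ideal.mem_quotient_iff_mem_sup, Ideal.map_span,
    Set.image_pair, map_mul, map_frobSum, map_pow]

lemma frobSum_add_eq_zero (hnK : n = 2 ^ K) (hk2 : 2 ^ k 2 = n) (hn : 2 ≤ n) :
    frobSum K (eps n k 0) (eps n k 1 ^ 2 + eps n k 0 * eps n k 1) +
      eps n k 0 ^ (2 ^ K - 1) * eps n k 1 = 0 := by
  have h2 := two_eq_zero_of_algebra (P n k)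
  rw [← pow_two_pow_eq_frobSum h2]
  · rw [← hnK, eps_one_pow_eq_zero hn hk2]
  · linear_combination -(eps n k 0 * eps n k 1) * h2

lemma ker_invHom (hn : 2 ≤ n) (hK : 1 ≤ K) (hnK : n = 2 ^ K) (hk2 : 2 ^ k 2 = n)
    (hk : ∀ c : Fin (n / 2 + 1), 2 ≤ (c : ℕ) →
      n ≤ (2 * (c : ℕ) - 2) * 2 ^ k ((c : ℕ) + 1)) :
    RingHom.ker (invHom n k) = relIdealPow n K k := by
  have h2 := two_eq_zero_of_algebra (P n k)
  have hx := eps_zero_pow_eq_zero n k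
  have hy := eps_one_pow_eq_zero hn hk2
  apply le_antisymm
  · intro f hf
    have hdvd := omega_pow_dvd_of_invHom_eq_zero hn hk2 hk hf
    have hpair := isTruncatedPair_mk hn k
    rw [mem_relIdealPow_iff hn hnK]
    exact IsTruncatedPair.mem_span_of_omega_pow_dvd (by rwa [← hnK]) hK
      (two_eq_zero_of_algebra _) (by rwa [← hnK])
  · rw [relIdealPow_eq hn hnK]
    refine sup_le (truncIdeal_le ?_ fun i hi => ?_) ?_
    · rw [RingHom.mem_ker, map_pow, invHom_X_zero, hx]
    · have hi0 := eps_pow_eq_zero n k i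
      rw [if_neg (by omega)] at hi0
      rw [RingHom.mem_ker, map_pow, invHom_X k hi, add_pow_two_pow h2, hi0, mul_pow, ← pow_mul,
        pow_eq_zero_of_le (hk i hi) hx, zero_mul, add_zero]
    · rw [Ideal.span_le, Set.insert_subset_iff, Set.singleton_subset_iff]
      constructor
      · have hx' : eps n k 0 * eps n k 0 ^ (2 ^ K - 1) = 0 := by
          rw [← pow_succ', Nat.sub_add_cancel Nat.one_le_two_pow, ← hnK, hx]
        rw [SetLike.mem_coe, RingHom.mem_ker, map_mul, invHom_frobSum hn, invHom_X_zero]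
        linear_combination eps n k 0 * frobSum_add_eq_zero hnK hk2 hn - eps n k 1 * hx'
      · rw [SetLike.mem_coe, RingHom.mem_ker, map_pow, invHom_X_one hn, add_pow_two_pow h2,
          ← hnK, mul_pow, hx, ← pow_mul, mul_comm, pow_mul, hy]
        simp

lemma invHom_fixed (hn : 2 ≤ n) {τ : P n k →ₐ[ZMod 2] P n k}
    (hτ0 : τ (eps n k 0) = eps n k 0)
    (hτ : ∀ i : Fin (n / 2 + 1), 1 ≤ (i : ℕ) →
      τ (eps n k i) = eps n k i + eps n k 0 ^ (2 * (i : ℕ) - 1))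
    (f : MvPolynomial (Fin (n / 2 + 1)) (ZMod 2)) : τ (invHom n k f) = invHom n k f := by
  have h2 := two_eq_zero_of_algebra (P n k)
  have hτ1 := map_eps_one hn hτ
  rw [← AlgHom.comp_apply]
  congr 1
  refine MvPolynomial.algHom_ext fun i => ?_
  rw [AlgHom.comp_apply]
  rcases fin_cases_of_val hn i with rfl | rfl | hi
  · rw [invHom_X_zero, hτ0]
  · rw [invHom_X_one hn, map_add, map_mul, map_pow, hτ0, hτ1]
    linear_combination (eps n k 0 * eps n k 1 + eps n k 0 ^ 2) * h2
  · rw [invHom_X k hi, map_add, map_mul, map_pow, hτ0, hτ1, hτ i (by omega),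
      show 2 * (i : ℕ) - 1 = 2 * (i : ℕ) - 2 + 1 by omega]
    linear_combination (eps n k 0 ^ (2 * (i : ℕ) - 2 + 1)) * h2

lemma exists_invHom_eq_of_fixed (hn : 2 ≤ n) (hK : 1 ≤ K) (hnK : n = 2 ^ K) (hk2 : 2 ^ k 2 = n)
    (hk : ∀ c : Fin (n / 2 + 1), 2 ≤ (c : ℕ) →
      n ≤ (2 * (c : ℕ) - 2) * 2 ^ k ((c : ℕ) + 1))
    {τ : P n k →ₐ[ZMod 2] P n k} (hτ0 : τ (eps n k 0) = eps n k 0)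
    (hτ : ∀ i : Fin (n / 2 + 1), 1 ≤ (i : ℕ) →
      τ (eps n k i) = eps n k i + eps n k 0 ^ (2 * (i : ℕ) - 1))
    {p : P n k} (hp : τ p = p) : ∃ f, invHom n k f = p := by
  have h2 := two_eq_zero_of_algebra (P n k)
  have hτ1 := map_eps_one hn hτ
  obtain ⟨a, b, rfl⟩ := exists_eq_invHom_add_mul hn k p
  rw [map_add, map_mul, invHom_fixed hn hτ0 hτ, invHom_fixed hn hτ0 hτ, hτ1] at hp
  have hxb : X 0 * b ∈ relIdealPow n K k := by
    rw [← ker_invHom hn hK hnK hk2 hk, RingHom.mem_ker, map_mul, invHom_X_zero]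
    linear_combination hp
  rw [mem_relIdealPow_iff hn hnK, map_mul] at hxb
  have hpair := isTruncatedPair_mk hn k
  have hb := IsTruncatedPair.mem_span_of_mul_mem (by rwa [← hnK]) hK
    (two_eq_zero_of_algebra _) hxb
  obtain ⟨c, d, hcd⟩ := Ideal.mem_span_pair.mp hb
  obtain ⟨c, rfl⟩ := Ideal.Quotient.mk_surjective c
  obtain ⟨d, rfl⟩ := Ideal.Quotient.mk_surjective d
  rw [← map_frobSum, ← map_pow, ← map_mul, ← map_mul, ← map_add, Ideal.Quotient.eq] at hcd
  have hle : truncIdeal n n k ≤ RingHom.ker (invHom n k) := by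
    rw [ker_invHom hn hK hnK hk2 hk, relIdealPow_eq hn hnK]
    exact le_sup_left
  have hker := RingHom.mem_ker.mp (hle hcd)
  have hrel := frobSum_add_eq_zero hnK hk2 hn
  have hx' : eps n k 0 ^ (2 ^ K - 1) * eps n k 0 = 0 := by
    rw [← pow_succ, Nat.sub_add_cancel Nat.one_le_two_pow, ← hnK, eps_zero_pow_eq_zero]
  refine ⟨a + c * (X 0 ^ (2 ^ K - 1) * X 1) + d * frobSum K (X 0) (X 1), ?_⟩
  simp only [map_add, map_sub, map_mul, map_pow, invHom_frobSum hn, invHom_X_zero, invHom_X_one hn]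
    at hker ⊢
  linear_combination eps n k 1 * hker + (invHom n k d - invHom n k c * eps n k 1) * hrel
    + (eps n k 0 ^ (2 ^ K - 1) * eps n k 1 ^ 2 * invHom n k c
      - eps n k 0 ^ (2 ^ K - 1) * eps n k 1 * invHom n k d) * h2
    + invHom n k c * eps n k 1 * hx'

end Presentation

/-- Fix `n ≥ 2`, `s = n/2 + 1`, `k i` as in the context, the algebra
`P = 𝔽₂[ε₁,…,ε_s]/(ε₁ⁿ, ε₂^{2^{k₂}}, …, ε_s^{2^{k_s}})` and the involution `τ` with
`τ(ε̄₁) = ε̄₁`, `τ(ε̄ᵢ) = ε̄ᵢ + ε̄₁^{2i−3}`; `Pfix n k τ` is the invariant subalgebra `P^τ`.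
Suppose `n = 2^K` with `K ≥ 1` (so that `k 2 = K`). Then there is an isomorphism of
`𝔽₂`-algebras
`P^τ ≅ 𝔽₂[e₁,…,e_s]/(e₁^{2^K}, e₂^{2^K}, e₃^{2^{k₃}}, …, e_s^{2^{k_s}},
e₁·(Σ_{j=0}^{K−1} e₁^{2^K−2^{j+1}}·e₂^{2^j}))` (formulated below in the other direction)
given by `e₁ ↦ ε̄₁`, `e₂ ↦ ε̄₂² + ε̄₁ε̄₂`, and `e_i ↦ ε̄_i + ε̄₁^{2i−4}ε̄₂` for `3 ≤ i ≤ s`. -/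
theorem invariant_subalgebra_presentation_of_two_pow
    (n : ℕ) (hn : 2 ≤ n) (K : ℕ) (hK : 1 ≤ K) (hnK : n = 2 ^ K) (k : ℕ → ℕ)
    (hk : ∀ i : ℕ, 2 ≤ i → i ≤ n / 2 + 1 →
      (2 * i - 3) * 2 ^ k i ≤ 2 * n - 1 ∧ 2 * n - 1 < (2 * i - 3) * 2 ^ (k i + 1))
    (τ : P n k →ₐ[ZMod 2] P n k)
    (hτ0 : τ (eps n k 0) = eps n k 0)
    (hτ : ∀ i : Fin (n / 2 + 1), 1 ≤ (i : ℕ) →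
      τ (eps n k i) = eps n k i + eps n k 0 ^ (2 * (i : ℕ) - 1)) :
    ∃ iso : (MvPolynomial (Fin (n / 2 + 1)) (ZMod 2) ⧸ relIdealPow n K k) ≃ₐ[ZMod 2]
        Pfix n k τ,
      (∀ u : Pfix n k τ, (u : P n k) = eps n k 0 →
        iso (Ideal.Quotient.mk (relIdealPow n K k) (X 0)) = u) ∧
      (∀ u : Pfix n k τ, (u : P n k) = eps n k 1 ^ 2 + eps n k 0 * eps n k 1 →
        iso (Ideal.Quotient.mk (relIdealPow n K k) (X 1)) = u) ∧
      (∀ c : Fin (n / 2 + 1), 2 ≤ (c : ℕ) →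
        ∀ u : Pfix n k τ,
          (u : P n k) = eps n k c + eps n k 0 ^ (2 * (c : ℕ) - 2) * eps n k 1 →
          iso (Ideal.Quotient.mk (relIdealPow n K k) (X c)) = u) := by
  have hk2 : 2 ^ k 2 = n := by
    obtain ⟨h1, h1'⟩ := hk 2 le_rfl (by omega)
    have hlt : 2 ^ k 2 < 2 ^ (K + 1) := by rw [pow_succ 2 K]; omega
    have hlt' : 2 ^ K < 2 ^ (k 2 + 1) := by omega
    have := (Nat.pow_lt_pow_iff_right one_lt_two).mp hlt
    have := (Nat.pow_lt_pow_iff_right one_lt_two).mp hlt'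
    rw [hnK, show k 2 = K by omega]
  have hkc : ∀ c : Fin (n / 2 + 1), 2 ≤ (c : ℕ) →
      n ≤ (2 * (c : ℕ) - 2) * 2 ^ k ((c : ℕ) + 1) := fun c hc => by
    have h := hk (c + 1) (by omega) (by omega)
    rw [show 2 * ((c : ℕ) + 1) - 3 = 2 * (c : ℕ) - 1 by omega] at h
    exact le_mul_two_pow hnK hc h.1 h.2
  have hker := ker_invHom hn hK hnK hk2 hkc
  let φ : MvPolynomial (Fin (n / 2 + 1)) (ZMod 2) →ₐ[ZMod 2] Pfix n k τ :=
    (invHom n k).codRestrict (Pfix n k τ) fun f => invHom_fixed hn hτ0 hτ f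
  have hφ : ∀ f, (φ f : P n k) = invHom n k f := fun f => rfl
  have hφker : RingHom.ker φ = relIdealPow n K k := by
    rw [← hker]
    ext f
    rw [RingHom.mem_ker, RingHom.mem_ker, ← hφ, ZeroMemClass.coe_eq_zero]
  have hφsurj : Function.Surjective φ := fun u => by
    obtain ⟨f, hf⟩ := exists_invHom_eq_of_fixed hn hK hnK hk2 hkc hτ0 hτ u.2
    exact ⟨f, Subtype.ext hf⟩
  refine ⟨(Ideal.quotientEquivAlgOfEq (ZMod 2) hφker.symm).trans
    (Ideal.quotientKerAlgEquivOfSurjective hφsurj), ?_, ?_, ?_⟩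
  · intro u hu
    exact Subtype.ext ((invHom_X_zero n k).trans hu.symm)
  · intro u hu
    exact Subtype.ext ((invHom_X_one hn k).trans hu.symm)
  · intro c hc u hu
    exact Subtype.ext ((invHom_X k hc).trans hu.symm)
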